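/- Let w : {1,…,n} → ℝ with w(j) > 0 for all j and f : {1,…,n} → ℝ with f(1) > 0; set f(0) = w(0) = f(n+1) = w(n+1) = 0, and let W* be the value of the primal linear program: maximize Σ_{(a,x,b)∈I} w(b+x)·θ(a,x,b) over θ ≥ 0 subject to Σ_{(a,x,b)∈I} [a·f(a+x) − b·f(a+x+1)]·θ(a,x,b) ≥ 0 and Σ_{(a,x,b)∈I} w(a+x)·θ(a,x,b) = 1. Then for every game G ∈ G_{f,w}^n, every pure Nash equilibrium a^e of G, and every allocation a of G, it holds that W(a) ≤ W* · W(a^e). -/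

import Mathlib

/-!
Fix the equilibrium `ae` and the allocation `a`. Each resource `r` has a profile `(α, x, β)`: the
numbers of agents using `r` only in `ae`, in both allocations, and only in `a`. Let `θ(p)` be the
total value of the resources with profile `p`. Then any sum `∑ r, v r * g (profile r)` with
`g (0,0,0) = 0` equals `∑ p ∈ indexSet n, g p * θ p` (`sum_mass`). In particular `W(ae)` and `W(a)`
are the two LP sums in `θ`, and adding up the Nash inequalities for the deviations `ae i → a i` gives
the inequality constraint of the LP (`nash_sum`). If `W(ae) > 0`, then `θ / W(ae)` is feasible with
objective `W(a) / W(ae)`.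

Two more points are needed: the LP must be bounded for its supremum to be meaningful, and the case
`W(ae) = 0` requires `W(a) ≤ 0`. Both follow from weak duality and the existence of a dual feasible
pair `(λ, μ)` (`exists_dual`).
-/

/-- A resource allocation game with at most `n` agents: a finite resource set `R`,
a nonnegative value `v r` for each resource, `m ≤ n` agents, and for each agent a
nonempty finite collection of admissible choices (subsets of `R`). -/
structure RAGame (n : ℕ) where
  R : Type
  [fintypeR : Fintype R]
  [decEqR : DecidableEq R]
  v : R → ℝ
  v_nonneg : ∀ r, 0 ≤ v r
  m : ℕ
  m_le : m ≤ n
  A : Fin m → Finset (Finset R)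
  A_ne : ∀ i, (A i).Nonempty

attribute [instance] RAGame.fintypeR RAGame.decEqR

namespace RAGame

variable {n : ℕ}

/-- An allocation: each agent selects an admissible choice. -/
def Alloc (G : RAGame n) : Type := (i : Fin G.m) → {s : Finset G.R // s ∈ G.A i}

/-- `|a|_r`: the number of agents selecting resource `r` in allocation `a`. -/
def count (G : RAGame n) (a : G.Alloc) (r : G.R) : ℕ :=
  (Finset.univ.filter fun i => r ∈ (a i).val).card

/-- The welfare `W(a) = Σ_{r covered} v_r · w(|a|_r)`. -/
def welfare (G : RAGame n) (w : ℕ → ℝ) (a : G.Alloc) : ℝ :=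
  ∑ r ∈ Finset.univ.filter (fun r => 0 < G.count a r), G.v r * w (G.count a r)

/-- Agent `i`'s utility `U_i(a) = Σ_{r ∈ a_i} v_r · f(|a|_r)`. -/
def utility (G : RAGame n) (f : ℕ → ℝ) (a : G.Alloc) (i : Fin G.m) : ℝ :=
  ∑ r ∈ (a i).val, G.v r * f (G.count a r)

/-- Pure Nash equilibrium: no unilateral deviation improves an agent's utility. -/
def IsNash (G : RAGame n) (f : ℕ → ℝ) (a : G.Alloc) : Prop :=
  ∀ (i : Fin G.m) (s : {s : Finset G.R // s ∈ G.A i}),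
    G.utility f (Function.update a i s) i ≤ G.utility f a i

/-- The optimal welfare `max_{a ∈ A} W(a)`. -/
noncomputable def optVal (G : RAGame n) (w : ℕ → ℝ) : ℝ :=
  sSup { x : ℝ | ∃ a : G.Alloc, x = G.welfare w a }

/-- The worst equilibrium welfare `min_{a ∈ NE(G)} W(a)`. -/
noncomputable def worstNash (G : RAGame n) (f w : ℕ → ℝ) : ℝ :=
  sInf { x : ℝ | ∃ a : G.Alloc, G.IsNash f a ∧ x = G.welfare w a }

end RAGame

/-- The price of anarchy `PoA(f,w,n)` over the class `G_{f,w}^n` of games with at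
most `n` agents and strictly positive optimal welfare. -/
noncomputable def PoA (f w : ℕ → ℝ) (n : ℕ) : ℝ :=
  sInf { x : ℝ | ∃ G : RAGame n, 0 < G.optVal w ∧ x = G.worstNash f w / G.optVal w }

/-- The index set `I = {(a,x,b) ∈ ℕ³ : 1 ≤ a+x+b ≤ n}`. -/
def indexSet (n : ℕ) : Finset (ℕ × ℕ × ℕ) :=
  ((Finset.range (n+1)) ×ˢ (Finset.range (n+1)) ×ˢ (Finset.range (n+1))).filter
    (fun p => 1 ≤ p.1 + p.2.1 + p.2.2 ∧ p.1 + p.2.1 + p.2.2 ≤ n)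

/-- The reduced index set `I_R = {(a,x,b) ∈ I : a·x·b = 0 or a+x+b = n}`. -/
def indexSetR (n : ℕ) : Finset (ℕ × ℕ × ℕ) :=
  (indexSet n).filter (fun p => p.1 * p.2.1 * p.2.2 = 0 ∨ p.1 + p.2.1 + p.2.2 = n)

/-- Feasibility for the primal linear program (6):
`θ ≥ 0`, `Σ [a f(a+x) − b f(a+x+1)] θ(a,x,b) ≥ 0`, `Σ w(a+x) θ(a,x,b) = 1`. -/
def PrimalFeasible (f w : ℕ → ℝ) (n : ℕ) (θ : ℕ × ℕ × ℕ → ℝ) : Prop :=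
  (∀ p ∈ indexSet n, 0 ≤ θ p) ∧
  0 ≤ ∑ p ∈ indexSet n,
      ((p.1 : ℝ) * f (p.1 + p.2.1) - (p.2.2 : ℝ) * f (p.1 + p.2.1 + 1)) * θ p ∧
  ∑ p ∈ indexSet n, w (p.1 + p.2.1) * θ p = 1

/-- Objective of the primal linear program: `Σ w(b+x) θ(a,x,b)`. -/
def primalObj (w : ℕ → ℝ) (n : ℕ) (θ : ℕ × ℕ × ℕ → ℝ) : ℝ :=
  ∑ p ∈ indexSet n, w (p.2.2 + p.2.1) * θ p

/-- The dual constraint at index `(a,x,b)`: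
`w(b+x) − μ w(a+x) + λ [a f(a+x) − b f(a+x+1)] ≤ 0`. -/
def DualConstr (f w : ℕ → ℝ) (lam mu : ℝ) (p : ℕ × ℕ × ℕ) : Prop :=
  w (p.2.2 + p.2.1) - mu * w (p.1 + p.2.1) +
      lam * ((p.1 : ℝ) * f (p.1 + p.2.1) - (p.2.2 : ℝ) * f (p.1 + p.2.1 + 1)) ≤ 0

lemma mem_indexSet {n : ℕ} {p : ℕ × ℕ × ℕ} :
    p ∈ indexSet n ↔ 1 ≤ p.1 + p.2.1 + p.2.2 ∧ p.1 + p.2.1 + p.2.2 ≤ n := by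
  simp only [indexSet, Finset.mem_filter, Finset.mem_product, Finset.mem_range]
  omega

/-- The coefficient of `θ(a,x,b)` in the equilibrium constraint: `a f(a+x) − b f(a+x+1)`. -/
def nashCoeff (f : ℕ → ℝ) (p : ℕ × ℕ × ℕ) : ℝ :=
  (p.1 : ℝ) * f (p.1 + p.2.1) - (p.2.2 : ℝ) * f (p.1 + p.2.1 + 1)

/-- The dual program is feasible. Constraints with `a + x = 0` read `w b ≤ λ b f(1)` and hold for
large `λ`, since `f 1 > 0`; the others hold for large `μ`, since `w (a+x) > 0`. -/
lemma exists_dual (n : ℕ) (w f : ℕ → ℝ) (hw : ∀ j, 1 ≤ j → j ≤ n → 0 < w j)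
    (hw0 : w 0 = 0) (hf1 : 0 < f 1) :
    ∃ lam mu : ℝ, 0 ≤ lam ∧ ∀ p ∈ indexSet n, DualConstr f w lam mu p := by
  obtain ⟨lam, hlam0, hlam⟩ : ∃ lam : ℝ, 0 ≤ lam ∧ ∀ j ≤ n, w j ≤ lam * f 1 := by
    refine ⟨(∑ j ∈ Finset.range (n + 1), |w j|) / f 1, by positivity, fun j hj => ?_⟩
    rw [div_mul_cancel₀ _ hf1.ne']
    exact (le_abs_self _).trans
      (Finset.single_le_sum (f := fun j => |w j|) (fun _ _ => abs_nonneg _)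
        (Finset.mem_range.2 (by omega)))
  obtain ⟨mu, hmu⟩ := Finset.exists_le ((indexSet n).image fun p =>
    (w (p.2.2 + p.2.1) + lam * nashCoeff f p) / w (p.1 + p.2.1))
  refine ⟨lam, mu, hlam0, fun p hp => ?_⟩
  have hpI := mem_indexSet.1 hp
  have hmu' := hmu _ (Finset.mem_image_of_mem _ hp)
  obtain ⟨a, x, b⟩ := p
  simp only [DualConstr, nashCoeff] at *
  by_cases h : a + x = 0
  · obtain ⟨rfl, rfl⟩ : a = 0 ∧ x = 0 := by omega
    have h1 : (1 : ℝ) ≤ b := by exact_mod_cast (by omega : 1 ≤ b)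
    have h2 := hlam b (by omega)
    have h3 : 0 ≤ lam * f 1 := by positivity
    simp [hw0]
    nlinarith
  · have hpos := hw (a + x) (by omega) (by omega)
    rw [div_le_iff₀ hpos] at hmu'
    linarith

/-- Weak duality. -/
lemma primal_bddAbove (n : ℕ) (w f : ℕ → ℝ) (hw : ∀ j, 1 ≤ j → j ≤ n → 0 < w j)
    (hw0 : w 0 = 0) (hf1 : 0 < f 1) :
    BddAbove { S : ℝ | ∃ θ : ℕ × ℕ × ℕ → ℝ, PrimalFeasible f w n θ ∧ S = primalObj w n θ } := by
  obtain ⟨lam, mu, hlam, hd⟩ := exists_dual n w f hw hw0 hf1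
  refine ⟨mu, ?_⟩
  rintro S ⟨θ, ⟨h0, hN, hW⟩, rfl⟩
  have key : primalObj w n θ - mu * ∑ p ∈ indexSet n, w (p.1 + p.2.1) * θ p
      + lam * ∑ p ∈ indexSet n,
        ((p.1 : ℝ) * f (p.1 + p.2.1) - (p.2.2 : ℝ) * f (p.1 + p.2.1 + 1)) * θ p ≤ 0 := by
    rw [primalObj, Finset.mul_sum, Finset.mul_sum, ← Finset.sum_sub_distrib,
      ← Finset.sum_add_distrib]
    refine Finset.sum_nonpos fun p hp => ?_
    have := mul_nonpos_of_nonpos_of_nonneg (hd p hp) (h0 p hp)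
    linarith
  rw [hW] at key
  have := mul_nonneg hlam hN
  linarith

namespace RAGame

variable {n : ℕ} (G : RAGame n)

/-- The agents selecting resource `r` in allocation `a`. -/
def users (a : G.Alloc) (r : G.R) : Finset (Fin G.m) :=
  Finset.univ.filter fun i => r ∈ (a i).val

/-- The profile `(α, x, β)` of `r`: the numbers of agents using `r` only in `ae`, in both
allocations, and only in `a`. -/
def profile (ae a : G.Alloc) (r : G.R) : ℕ × ℕ × ℕ :=
  ((G.users ae r \ G.users a r).card, (G.users ae r ∩ G.users a r).card,
    (G.users a r \ G.users ae r).card)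

/-- The total value of the resources with profile `p`. -/
noncomputable def mass (ae a : G.Alloc) (p : ℕ × ℕ × ℕ) : ℝ :=
  ∑ r, if G.profile ae a r = p then G.v r else 0

lemma mass_nonneg (ae a : G.Alloc) (p : ℕ × ℕ × ℕ) : 0 ≤ G.mass ae a p :=
  Finset.sum_nonneg fun r _ => by split_ifs <;> simp [G.v_nonneg]

lemma count_ae (ae a : G.Alloc) (r : G.R) :
    (G.profile ae a r).1 + (G.profile ae a r).2.1 = G.count ae r := by
  simp only [profile]
  exact Finset.card_sdiff_add_card_inter _ _

lemma count_a (ae a : G.Alloc) (r : G.R) :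
    (G.profile ae a r).2.2 + (G.profile ae a r).2.1 = G.count a r := by
  simp only [profile]
  rw [Finset.inter_comm]
  exact Finset.card_sdiff_add_card_inter _ _

lemma profile_sum_le (ae a : G.Alloc) (r : G.R) :
    (G.profile ae a r).1 + (G.profile ae a r).2.1 + (G.profile ae a r).2.2 ≤ n := by
  have h : (G.users ae r).card + (G.users a r \ G.users ae r).card
      = (G.users ae r ∪ G.users a r).card := by
    rw [← Finset.card_union_of_disjoint Finset.disjoint_sdiff, Finset.union_sdiff_self_eq_union]
  have h2 := (G.users ae r ∪ G.users a r).card_le_univ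
  rw [Fintype.card_fin] at h2
  have h3 : (G.users ae r \ G.users a r).card + (G.users ae r ∩ G.users a r).card
      = (G.users ae r).card := Finset.card_sdiff_add_card_inter _ _
  have := G.m_le
  simp only [profile]
  omega

/-- Grouping resources by profile; resources used in neither allocation contribute nothing. -/
lemma sum_mass (ae a : G.Alloc) (g : ℕ × ℕ × ℕ → ℝ) (hg : g (0, 0, 0) = 0) :
    ∑ p ∈ indexSet n, g p * G.mass ae a p = ∑ r, G.v r * g (G.profile ae a r) := by
  simp only [mass, Finset.mul_sum]
  rw [Finset.sum_comm]
  refine Finset.sum_congr rfl fun r _ => ?_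
  simp only [mul_ite, mul_zero, Finset.sum_ite_eq]
  split_ifs with h
  · ring
  · have h1 := G.profile_sum_le ae a r
    rw [mem_indexSet] at h
    have h0 : G.profile ae a r = (0, 0, 0) := by
      ext <;> simp only <;> omega
    rw [h0, hg, mul_zero]

lemma welfare_eq (w : ℕ → ℝ) (hw0 : w 0 = 0) (a : G.Alloc) :
    G.welfare w a = ∑ r, G.v r * w (G.count a r) := by
  rw [welfare, Finset.sum_filter]
  refine Finset.sum_congr rfl fun r _ => ?_
  split_ifs with h
  · rfl
  · rw [Nat.eq_zero_of_not_pos h, hw0, mul_zero]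

lemma update_same (ae : G.Alloc) (i : Fin G.m) (s : {s : Finset G.R // s ∈ G.A i}) :
    (Function.update ae i s : G.Alloc) i = s :=
  Function.update_self (β := fun i => {s : Finset G.R // s ∈ G.A i}) i s ae

lemma update_other (ae : G.Alloc) (i : Fin G.m) (s : {s : Finset G.R // s ∈ G.A i})
    {j : Fin G.m} (hj : j ≠ i) : (Function.update ae i s : G.Alloc) j = ae j :=
  Function.update_of_ne (β := fun i => {s : Finset G.R // s ∈ G.A i}) hj s ae

/-- After agent `i` deviates to `s ∋ r`, the number of users of `r` grows by one exactly if `i` was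
not using `r` before. -/
lemma count_update (ae : G.Alloc) (i : Fin G.m) (s : {s : Finset G.R // s ∈ G.A i}) (r : G.R)
    (hr : r ∈ s.val) :
    G.count (Function.update ae i s) r =
      if r ∈ (ae i).val then G.count ae r else G.count ae r + 1 := by
  have h : (Finset.univ.filter fun j => r ∈ (Function.update ae i s j).val)
      = insert i (G.users ae r) := by
    ext j
    by_cases hj : j = i
    · subst hj
      simpa [update_same] using hr
    · simp [users, hj, G.update_other ae i s hj]
  simp only [count]
  rw [h]
  by_cases hi : r ∈ (ae i).val
  · rw [if_pos hi, Finset.insert_eq_of_mem (by simpa [users] using hi)]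
    rfl
  · rw [if_neg hi, Finset.card_insert_of_notMem (by simpa [users] using hi)]
    rfl

/-- Summing, over all agents `i`, the equilibrium inequality for the deviation to `a i`. -/
lemma nash_sum (f : ℕ → ℝ) (ae : G.Alloc) (hae : G.IsNash f ae) (a : G.Alloc) :
    0 ≤ ∑ r, G.v r * nashCoeff f (G.profile ae a r) := by
  have h1 : 0 ≤ ∑ i, (G.utility f ae i - G.utility f (Function.update ae i (a i)) i) :=
    Finset.sum_nonneg fun i _ => sub_nonneg.2 (hae i (a i))
  refine h1.trans_eq ?_
  have h2 : ∀ i, G.utility f ae i - G.utility f (Function.update ae i (a i)) i =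
      ∑ r, G.v r * ((if i ∈ G.users ae r \ G.users a r then f (G.count ae r) else 0)
        - (if i ∈ G.users a r \ G.users ae r then f (G.count ae r + 1) else 0)) := by
    intro i
    have e1 : G.utility f ae i =
        ∑ r, if r ∈ (ae i).val then G.v r * f (G.count ae r) else 0 := by
      simp [utility]
    have e2 : G.utility f (Function.update ae i (a i)) i =
        ∑ r, if r ∈ (a i).val then
          G.v r * f (G.count (Function.update ae i (a i)) r) else 0 := by
      simp [utility, update_same]
    rw [e1, e2, ← Finset.sum_sub_distrib]
    refine Finset.sum_congr rfl fun r _ => ?_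
    by_cases hE : r ∈ (ae i).val <;> by_cases hO : r ∈ (a i).val <;>
      simp [users, hE, hO, count_update]
  rw [Finset.sum_congr rfl fun i _ => h2 i, Finset.sum_comm]
  refine Finset.sum_congr rfl fun r _ => ?_
  rw [← Finset.mul_sum, Finset.sum_sub_distrib, nashCoeff, count_ae]
  simp only [Finset.sum_ite_mem, Finset.univ_inter, Finset.sum_const, nsmul_eq_mul, profile]

end RAGame

/-- Soundness of the primal linear program: with `W*` the value of the primal LP,
for every game in `G_{f,w}^n`, every pure Nash equilibrium `a^e` and every
allocation `a`, it holds `W(a) ≤ W* · W(a^e)`. -/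
theorem primal_lp_bounds_every_game (n : ℕ) (w f : ℕ → ℝ)
    (hw : ∀ j, 1 ≤ j → j ≤ n → 0 < w j)
    (hw0 : w 0 = 0) (hwn1 : w (n + 1) = 0)
    (hf0 : f 0 = 0) (hfn1 : f (n + 1) = 0)
    (hf1 : 0 < f 1)
    (G : RAGame n) (hG : 0 < G.optVal w)
    (ae : G.Alloc) (hae : G.IsNash f ae) (a : G.Alloc) :
    G.welfare w a ≤
      sSup { S : ℝ | ∃ θ : ℕ × ℕ × ℕ → ℝ, PrimalFeasible f w n θ ∧ S = primalObj w n θ } *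
        G.welfare w ae := by
  have hWa : ∑ p ∈ indexSet n, w (p.2.2 + p.2.1) * G.mass ae a p = G.welfare w a := by
    rw [G.sum_mass ae a (fun p => w (p.2.2 + p.2.1)) (by simpa using hw0), G.welfare_eq w hw0]
    simp only [G.count_a]
  have hWe : ∑ p ∈ indexSet n, w (p.1 + p.2.1) * G.mass ae a p = G.welfare w ae := by
    rw [G.sum_mass ae a (fun p => w (p.1 + p.2.1)) (by simpa using hw0), G.welfare_eq w hw0]
    simp only [G.count_ae]
  have hN : 0 ≤ ∑ p ∈ indexSet n, nashCoeff f p * G.mass ae a p := by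
    rw [G.sum_mass ae a (nashCoeff f) (by simp [nashCoeff])]
    exact G.nash_sum f ae hae a
  have hWe0 : 0 ≤ G.welfare w ae := by
    rw [← hWe]
    refine Finset.sum_nonneg fun p hp => mul_nonneg ?_ (G.mass_nonneg ae a p)
    have hpI := mem_indexSet.1 hp
    rcases Nat.eq_zero_or_pos (p.1 + p.2.1) with h | h
    · rw [h, hw0]
    · exact (hw _ h (by omega)).le
  rcases hWe0.eq_or_lt with h0 | hpos
  · -- Weak duality applied to the unnormalized `θ` gives `W(a) ≤ μ · W(ae) = 0`.
    obtain ⟨lam, mu, hlam, hd⟩ := exists_dual n w f hw hw0 hf1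
    have key : G.welfare w a - mu * G.welfare w ae
        + lam * ∑ p ∈ indexSet n, nashCoeff f p * G.mass ae a p ≤ 0 := by
      rw [← hWa, ← hWe, Finset.mul_sum, Finset.mul_sum, ← Finset.sum_sub_distrib,
        ← Finset.sum_add_distrib]
      refine Finset.sum_nonpos fun p hp => ?_
      have := mul_nonpos_of_nonpos_of_nonneg (hd p hp) (G.mass_nonneg ae a p)
      simp only [nashCoeff]
      linarith
    have := mul_nonneg hlam hN
    rw [← h0] at key ⊢
    linarith
  · rw [← div_le_iff₀ hpos]
    refine le_csSup (primal_bddAbove n w f hw hw0 hf1)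
      ⟨fun p => G.mass ae a p / G.welfare w ae, ⟨fun p _ => ?_, ?_, ?_⟩, ?_⟩
    · exact div_nonneg (G.mass_nonneg ae a p) hpos.le
    · simp only [← mul_div_assoc, ← Finset.sum_div]
      exact div_nonneg hN hpos.le
    · simp only [← mul_div_assoc, ← Finset.sum_div]
      rw [hWe, div_self hpos.ne']
    · simp only [primalObj, ← mul_div_assoc, ← Finset.sum_div]
      rw [hWa]
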